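/- Under the hypotheses of Theorem 2 (finite 𝒫 = 𝒫_c ∪ 𝒫_d with M_p symmetric positive definite with eigenvalues ≥ λ̄ > 0 for p ∈ 𝒫_c and symmetric positive semidefinite for p ∈ 𝒫_d; 0 < γ < 1; k > 1/(4γ(1−γ²)λ̄); piecewise-constant switching signal σ with dwell time τ > 0 such that on every window [jT, (j+1)T) the total time with σ(t) ∈ 𝒫_c is at least T^c with βT^c > α(T − T^c), where β = μ̄/(2(1+γ)), μ̄ = (1−γ²)kλ̄ + γ − √(((1−γ²)kλ̄ − γ)² + 1), α = 2(√(1+γ²) − γ)/(1−γ)), suppose additionally that δ(t) ≡ 0. Then the solution ε of ε̇(t) = (F_{σ(t)} ⊗ I₂)ε(t) satisfies ε(t) → 0 as t → ∞. -/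

import Mathlib

open Matrix Kronecker

/-!
Since `F_p ⊗ I₂` acts as `F_p` on each spatial coordinate, it is enough to treat `ż = F_σ z` with
`z = (x, v)`. Along its solutions `V = |x|² - 2γ x·v + |v|²` satisfies
`V̇ = -2k(1-γ²) xᵀM_σx + 2 x·v - 2γ|v|²`. If `xᵀMx ≥ λ|x|²`, the right-hand side is at most
`-μ|z|²`, where `μ` is the smallest eigenvalue of `[[2(1-γ²)kλ, -1], [-1, 2γ]]`. The connected modes
are the case `λ = λ̄`, the others the case `λ = 0`. As `(1-γ)|z|² ≤ V ≤ (1+γ)|z|²`, the function `V`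
decays exponentially in connected modes and grows at most exponentially in the others. Integrating
the rate over a window gives `log V` a uniformly negative increment, so `V → 0`.
-/

section VectorsAndMatrices

lemma kronecker_one_mulVec_apply {R l n m : Type*} [NonAssocSemiring R] [Fintype n] [Fintype m]
    [DecidableEq m] (A : Matrix l n R) (w : n × m → R) (i : l) (a : m) :
    ((A ⊗ₖ (1 : Matrix m m R)) *ᵥ w) (i, a) = (A *ᵥ fun j => w (j, a)) i := by
  simp [mulVec, dotProduct, Fintype.sum_prod_type, one_apply]

open scoped MatrixOrder in
lemma mul_dotProduct_self_le_of_le_eigenvalues {N : Type*} [Fintype N] [DecidableEq N]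
    {A : Matrix N N ℝ} {lam : ℝ} (hA : A.IsHermitian) (h : ∀ i, lam ≤ hA.eigenvalues i)
    (x : N → ℝ) : lam * (x ⬝ᵥ x) ≤ x ⬝ᵥ A *ᵥ x := by
  have hle : algebraMap ℝ (Matrix N N ℝ) lam ≤ A := by
    rw [algebraMap_le_iff_le_spectrum (ha := hA.isSelfAdjoint),
      hA.spectrum_real_eq_range_eigenvalues]
    exact Set.forall_mem_range.2 h
  have hsub := (le_iff.1 hle).dotProduct_mulVec_nonneg x
  simpa [sub_mulVec, dotProduct_sub, Algebra.algebraMap_eq_smul_one, smul_mulVec] using hsub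

lemma dotProduct_quadratic_nonneg {N : Type*} [Fintype N] {a b c : ℝ} (ha : 0 < a)
    (hb : b ^ 2 ≤ a * c) (x v : N → ℝ) :
    0 ≤ a * (x ⬝ᵥ x) - 2 * b * (x ⬝ᵥ v) + c * (v ⬝ᵥ v) := by
  have completed_square : a * (a * (x ⬝ᵥ x) - 2 * b * (x ⬝ᵥ v) + c * (v ⬝ᵥ v)) =
      (a • x - b • v) ⬝ᵥ (a • x - b • v) + (a * c - b ^ 2) * (v ⬝ᵥ v) := by
    simp only [sub_dotProduct, dotProduct_sub, smul_dotProduct, dotProduct_smul, smul_eq_mul,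
      dotProduct_comm v x]
    ring
  rw [← mul_nonneg_iff_of_pos_left ha, completed_square]
  have hdot (w : N → ℝ) : 0 ≤ w ⬝ᵥ w := dotProduct_self_star_nonneg w
  exact add_nonneg (hdot _) (mul_nonneg (sub_nonneg.2 hb) (hdot v))

lemma hasDerivAt_dotProduct {N : Type*} [Fintype N] {f g : ℝ → N → ℝ} {f' g' : N → ℝ} {s : ℝ}
    (hf : HasDerivAt f f' s) (hg : HasDerivAt g g' s) :
    HasDerivAt (fun t => f t ⬝ᵥ g t) (f' ⬝ᵥ g s + f s ⬝ᵥ g') s := by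
  simp only [dotProduct, ← Finset.sum_add_distrib]
  exact .fun_sum fun i _ => (hasDerivAt_pi.1 hf i).fun_mul (hasDerivAt_pi.1 hg i)

open Filter Topology in
lemma tendsto_zero_of_dotProduct_self {α N : Type*} [Fintype N] {l : Filter α} {z : α → N → ℝ}
    (h : Tendsto (fun t => z t ⬝ᵥ z t) l (𝓝 0)) : Tendsto z l (𝓝 0) := by
  refine tendsto_pi_nhds.2 fun i => (tendsto_zero_iff_abs_tendsto_zero _).2 ?_
  have hsq : Tendsto (fun t => z t i ^ 2) l (𝓝 0) :=
    squeeze_zero (fun t => sq_nonneg _)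
      (fun t => (sq (z t i)).trans_le <| Finset.single_le_sum
        (f := fun j => z t j * z t j) (fun j _ => mul_self_nonneg _) (Finset.mem_univ i)) h
  simpa only [Function.comp_def, Real.sqrt_sq_eq_abs, Real.sqrt_zero] using hsq.sqrt

end VectorsAndMatrices

section SwitchedComparison

open Filter Set MeasureTheory Topology

/-- `σ` is a switching signal on `[0, ∞)` with switching times `ts`, constant on each
`[ts i, ts (i + 1))`. Switching times may repeat, and instead of a dwell time only their
divergence is required. -/
structure IsSwitchingSignal {ι : Type*} (σ : ℝ → ι) (ts : ℕ → ℝ) : Prop where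
  zero : ts 0 = 0
  monotone : Monotone ts
  tendsto_atTop : Tendsto ts atTop atTop
  eqOn_Ico : ∀ i, ∀ s ∈ Ico (ts i) (ts (i + 1)), σ s = σ (ts i)

namespace IsSwitchingSignal

variable {ι κ : Type*} {σ : ℝ → ι} {ts : ℕ → ℝ}

lemma comp (h : IsSwitchingSignal σ ts) (f : ι → κ) : IsSwitchingSignal (fun s => f (σ s)) ts :=
  ⟨h.zero, h.monotone, h.tendsto_atTop, fun i s hs => congrArg f (h.eqOn_Ico i s hs)⟩

lemma nonneg (h : IsSwitchingSignal σ ts) (i : ℕ) : 0 ≤ ts i :=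
  h.zero ▸ h.monotone (Nat.zero_le i)

lemma ne_of_mem_Ioo (h : IsSwitchingSignal σ ts) {i : ℕ} {s : ℝ}
    (hs : s ∈ Ioo (ts i) (ts (i + 1))) (j : ℕ) : s ≠ ts j := by
  rintro rfl
  exact h.monotone.ne_of_lt_of_lt_nat i hs.1 hs.2 j rfl

lemma iUnion_Ico (h : IsSwitchingSignal σ ts) : ⋃ i, Ico (ts i) (ts (i + 1)) = Ici 0 := by
  simpa only [Nat.bot_eq_zero, Nat.succ_eq_succ, Nat.succ_eq_add_one, h.zero] using
    iUnion_Ico_map_succ_eq_Ici (f := ts) (fun i => h.monotone bot_le)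
      (not_bddAbove_of_tendsto_atTop h.tendsto_atTop)

lemma exists_mem_Ico (h : IsSwitchingSignal σ ts) {t : ℝ} (ht : 0 ≤ t) :
    ∃ i, t ∈ Ico (ts i) (ts (i + 1)) :=
  mem_iUnion.1 (h.iUnion_Ico ▸ ht)

lemma measurableSet_Ici_inter_preimage (h : IsSwitchingSignal σ ts) (S : Set ι) :
    MeasurableSet (Ici 0 ∩ σ ⁻¹' S) := by
  rw [← h.iUnion_Ico, iUnion_inter]
  refine .iUnion fun i => ?_
  by_cases hi : σ (ts i) ∈ S
  · convert measurableSet_Ico (a := ts i) (b := ts (i + 1)) using 1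
    exact inter_eq_left.2 fun s hs => by simpa only [mem_preimage, h.eqOn_Ico i s hs] using hi
  · convert MeasurableSet.empty using 1
    refine eq_empty_of_forall_notMem fun s hs => hi ?_
    simpa only [mem_preimage, h.eqOn_Ico i s hs.1] using hs.2

lemma intervalIntegrable_of_mem_Icc {r : ℝ → ℝ} (h : IsSwitchingSignal r ts) {i : ℕ} {t : ℝ}
    (ht : t ∈ Icc (ts i) (ts (i + 1))) : IntervalIntegrable r volume (ts i) t := by
  refine (intervalIntegrable_const (c := r (ts i))).congr_uIoo fun s hs => ?_
  rw [uIoo_of_le ht.1] at hs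
  exact (h.eqOn_Ico i s ⟨hs.1.le, hs.2.trans_le ht.2⟩).symm

lemma integral_of_mem_Icc {r : ℝ → ℝ} (h : IsSwitchingSignal r ts) {i : ℕ} {t : ℝ}
    (ht : t ∈ Icc (ts i) (ts (i + 1))) : ∫ s in ts i..t, r s = r (ts i) * (t - ts i) := by
  rw [intervalIntegral.integral_congr_Ioo_of_le ht.1 fun s hs =>
    h.eqOn_Ico i s ⟨hs.1.le, hs.2.trans_le ht.2⟩, intervalIntegral.integral_const, smul_eq_mul,
    mul_comm]

lemma intervalIntegrable_zero_switchTime {r : ℝ → ℝ} (h : IsSwitchingSignal r ts) (i : ℕ) :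
    IntervalIntegrable r volume 0 (ts i) :=
  h.zero ▸ IntervalIntegrable.trans_iterate fun j _ =>
    h.intervalIntegrable_of_mem_Icc (right_mem_Icc.2 (h.monotone j.le_succ))

lemma intervalIntegrable {r : ℝ → ℝ} (h : IsSwitchingSignal r ts) {a b : ℝ} (ha : 0 ≤ a)
    (hb : 0 ≤ b) : IntervalIntegrable r volume a b := by
  have from_zero {t : ℝ} (ht : 0 ≤ t) : IntervalIntegrable r volume 0 t := by
    obtain ⟨i, hi⟩ := h.exists_mem_Ico ht
    exact (h.intervalIntegrable_zero_switchTime i).trans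
      (h.intervalIntegrable_of_mem_Icc (Ico_subset_Icc_self hi))
  exact (from_zero ha).symm.trans (from_zero hb)

end IsSwitchingSignal

lemma le_mul_exp_of_hasDerivAt_le {f f' : ℝ → ℝ} {c a b : ℝ} (hab : a ≤ b)
    (hf : ContinuousOn f (Icc a b)) (hf' : ∀ t ∈ Ioo a b, HasDerivAt f (f' t) t)
    (bound : ∀ t ∈ Ioo a b, f' t ≤ c * f t) : f b ≤ f a * Real.exp (c * (b - a)) := by
  have hanti : AntitoneOn (fun t => f t * Real.exp (-(c * t))) (Icc a b) := by
    refine antitoneOn_of_hasDerivWithinAt_nonpos (convex_Icc a b) (by fun_prop)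
      (f' := fun t => (f' t - c * f t) * Real.exp (-(c * t))) ?_ ?_ <;>
      rw [interior_Icc] <;> intro t ht
    · have hexp := ((hasDerivAt_id t).const_mul c).fun_neg.exp
      exact (((hf' t ht).fun_mul hexp).congr_deriv (by simp only [id]; ring)).hasDerivWithinAt
    · exact mul_nonpos_of_nonpos_of_nonneg (sub_nonpos.2 (bound t ht)) (Real.exp_nonneg _)
  calc f b = f b * Real.exp (-(c * b)) * Real.exp (c * b) := by
        rw [mul_assoc, ← Real.exp_add, neg_add_cancel, Real.exp_zero, mul_one]
    _ ≤ f a * Real.exp (-(c * a)) * Real.exp (c * b) :=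
        mul_le_mul_of_nonneg_right (hanti (left_mem_Icc.2 hab) (right_mem_Icc.2 hab) hab)
          (Real.exp_nonneg _)
    _ = f a * Real.exp (c * (b - a)) := by rw [mul_assoc, ← Real.exp_add]; ring_nf

namespace IsSwitchingSignal

variable {r V V' : ℝ → ℝ} {ts : ℕ → ℝ}

lemma le_mul_exp_integral (h : IsSwitchingSignal r ts) (hV : ContinuousOn V (Ici 0))
    (hV' : ∀ s, 0 ≤ s → (∀ i, s ≠ ts i) → HasDerivAt V (V' s) s)
    (bound : ∀ s, V' s ≤ r s * V s) {t : ℝ} (ht : 0 ≤ t) :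
    V t ≤ V 0 * Real.exp (∫ s in 0..t, r s) := by
  have on_piece {i : ℕ} {u : ℝ} (hu : u ∈ Icc (ts i) (ts (i + 1))) :
      V u ≤ V (ts i) * Real.exp (∫ s in ts i..u, r s) := by
    have hsub {s : ℝ} (hs : s ∈ Ioo (ts i) u) : s ∈ Ioo (ts i) (ts (i + 1)) :=
      ⟨hs.1, hs.2.trans_le hu.2⟩
    rw [h.integral_of_mem_Icc hu]
    refine le_mul_exp_of_hasDerivAt_le hu.1
      (hV.mono fun s hs => (h.nonneg i).trans hs.1)
      (fun s hs => hV' s ((h.nonneg i).trans hs.1.le) (h.ne_of_mem_Ioo (hsub hs))) fun s hs => ?_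
    rw [← h.eqOn_Ico i s (Ioo_subset_Ico_self (hsub hs))]
    exact bound s
  have extend {i : ℕ} {u : ℝ} (hu : u ∈ Icc (ts i) (ts (i + 1)))
      (hi : V (ts i) ≤ V 0 * Real.exp (∫ s in 0..ts i, r s)) :
      V u ≤ V 0 * Real.exp (∫ s in 0..u, r s) := by
    rw [← intervalIntegral.integral_add_adjacent_intervals (h.intervalIntegrable_zero_switchTime i)
      (h.intervalIntegrable_of_mem_Icc hu), Real.exp_add, ← mul_assoc]
    exact (on_piece hu).trans (by gcongr)
  have at_switchTime (i : ℕ) : V (ts i) ≤ V 0 * Real.exp (∫ s in 0..ts i, r s) := by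
    induction i with
    | zero => simp [h.zero]
    | succ i ih => exact extend (right_mem_Icc.2 (h.monotone i.le_succ)) ih
  obtain ⟨i, hi⟩ := h.exists_mem_Ico ht
  exact extend (Ico_subset_Icc_self hi) (at_switchTime i)

end IsSwitchingSignal

lemma tendsto_integral_atBot_of_window_le {r : ℝ → ℝ} {T A c : ℝ} (hT : 0 < T) (hA : 0 ≤ A)
    (hc : 0 < c) (hint : ∀ a b, 0 ≤ a → 0 ≤ b → IntervalIntegrable r volume a b)
    (hrA : ∀ t, r t ≤ A)
    (hwin : ∀ j : ℕ, ∫ s in (j * T)..((j + 1) * T), r s ≤ -c) :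
    Tendsto (fun t => ∫ s in 0..t, r s) atTop atBot := by
  have hjT (j : ℕ) : 0 ≤ j * T := by positivity
  have at_multiple (j : ℕ) : ∫ s in 0..(j * T), r s ≤ -c * j := by
    induction j with
    | zero => simp
    | succ j ih =>
      rw [← intervalIntegral.integral_add_adjacent_intervals (hint 0 _ le_rfl (hjT j))
        (hint _ _ (hjT j) (hjT (j + 1)))]
      push_cast
      linarith [hwin j]
  have bound {t : ℝ} (ht : 0 ≤ t) : ∫ s in 0..t, r s ≤ -c * ⌊t / T⌋₊ + A * T := by
    set j := ⌊t / T⌋₊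
    have hjt : j * T ≤ t := (le_div_iff₀ hT).1 (Nat.floor_le (div_nonneg ht hT.le))
    have htj : t < (j + 1) * T := (div_lt_iff₀ hT).1 (Nat.lt_floor_add_one (t / T))
    have remainder : ∫ s in (j * T)..t, r s ≤ A * T := calc
      ∫ s in (j * T)..t, r s ≤ ∫ _ in (j * T)..t, A :=
        intervalIntegral.integral_mono hjt (hint _ _ (hjT j) ht) intervalIntegrable_const hrA
      _ = A * (t - j * T) := by
        rw [intervalIntegral.integral_const, smul_eq_mul, mul_comm]
      _ ≤ A * T := by gcongr; linarith
    rw [← intervalIntegral.integral_add_adjacent_intervals (hint 0 _ le_rfl (hjT j))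
      (hint _ _ (hjT j) ht)]
    linarith [at_multiple j]
  have hfloor : Tendsto (fun t : ℝ => (⌊t / T⌋₊ : ℝ)) atTop atTop :=
    tendsto_natCast_atTop_atTop.comp
      (tendsto_nat_floor_atTop.comp (tendsto_id.atTop_div_const hT))
  refine tendsto_atBot_mono' _ ((eventually_ge_atTop 0).mono fun t ht => bound ht)
    (tendsto_atBot_add_const_right _ _ (hfloor.const_mul_atTop_of_neg (neg_neg_of_pos hc)))

lemma integral_ite_le_of_le_volume {C : Set ℝ} [DecidablePred (· ∈ C)] {a b d g Tc : ℝ}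
    (hab : a ≤ b) (hC : MeasurableSet (Ico a b ∩ C)) (hgd : 0 ≤ g + d)
    (hTc : ENNReal.ofReal Tc ≤ volume (Ico a b ∩ C)) :
    ∫ s in a..b, (if s ∈ C then -d else g) ≤ g * (b - a - Tc) - d * Tc := by
  have hTc' : Tc ≤ volume.real (Ico a b ∩ C) :=
    (ENNReal.ofReal_le_iff_le_toReal
      (measure_lt_top_of_subset inter_subset_left measure_Ico_lt_top.ne).ne).1 hTc
  have hrate : EqOn (fun s => if s ∈ C then -d else g)
      (fun s => g - (Ico a b ∩ C).indicator (fun _ => g + d) s) (Ico a b) := by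
    intro s hs
    by_cases hsC : s ∈ C <;> simp [hs, hsC]
  calc ∫ s in a..b, (if s ∈ C then -d else g)
      = ∫ s in Ico a b, (g - (Ico a b ∩ C).indicator (fun _ => g + d) s) := by
        rw [intervalIntegral.integral_of_le hab, ← integral_Ico_eq_integral_Ioc]
        exact setIntegral_congr_fun measurableSet_Ico hrate
    _ = g * (b - a) - (g + d) * volume.real (Ico a b ∩ C) := by
        rw [integral_sub (integrable_const _) ((integrable_const _).indicator hC),
          setIntegral_indicator hC, setIntegral_const, setIntegral_const,
          Real.volume_real_Ico_of_le hab, ← inter_assoc, inter_self, smul_eq_mul, smul_eq_mul,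
          mul_comm, mul_comm (g + d)]
    _ ≤ g * (b - a - Tc) - d * Tc := by
        linarith [mul_le_mul_of_nonneg_left hTc' hgd]

lemma IsSwitchingSignal.tendsto_zero_of_deriv_le {ι : Type*} {σ : ℝ → ι} {ts : ℕ → ℝ}
    (hσ : IsSwitchingSignal σ ts) {P : Set ι} {V V' : ℝ → ℝ} {d g T Tc : ℝ}
    (hT : 0 < T) (hd : 0 ≤ d) (hg : 0 ≤ g) (hdg : g * (T - Tc) < d * Tc)
    (hwin : ∀ j : ℕ,
      ENNReal.ofReal Tc ≤ volume {s : ℝ | s ∈ Ico (j * T) ((j + 1) * T) ∧ σ s ∈ P})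
    (hV : ContinuousOn V (Ici 0)) (hV0 : ∀ t, 0 ≤ V t)
    (hV' : ∀ s, 0 ≤ s → (∀ i, s ≠ ts i) → HasDerivAt V (V' s) s)
    (decay : ∀ s, σ s ∈ P → V' s ≤ -d * V s) (growth : ∀ s, σ s ∉ P → V' s ≤ g * V s) :
    Tendsto V atTop (𝓝 0) := by
  classical
  set r : ℝ → ℝ := fun s => if σ s ∈ P then -d else g with hr
  have hrσ : IsSwitchingSignal r ts := hσ.comp fun p => if p ∈ P then -d else g
  have hVr (s : ℝ) : V' s ≤ r s * V s := by
    by_cases hs : σ s ∈ P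
    · simpa only [hr, hs, if_true] using decay s hs
    · simpa only [hr, hs, if_false] using growth s hs
  have hrg (s : ℝ) : r s ≤ g := by
    simp only [hr]
    split_ifs <;> linarith
  have hrwin (j : ℕ) : ∫ s in (j * T)..((j + 1) * T), r s ≤ -(d * Tc - g * (T - Tc)) := by
    have hmeas : MeasurableSet (Ico (j * T) ((j + 1) * T) ∩ σ ⁻¹' P) := by
      have hsub : Ico (j * T) ((j + 1) * T) ⊆ Ici 0 := fun s hs => le_trans (by positivity) hs.1
      rw [← inter_eq_left.2 hsub, inter_assoc]
      exact measurableSet_Ico.inter (hσ.measurableSet_Ici_inter_preimage P)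
    refine (integral_ite_le_of_le_volume (C := σ ⁻¹' P) (by linarith) hmeas (by positivity)
      (hwin j)).trans_eq (by ring)
  have hlog : Tendsto (fun t => ∫ s in 0..t, r s) atTop atBot :=
    tendsto_integral_atBot_of_window_le hT hg (sub_pos.2 hdg)
      (fun _ _ ha hb => hrσ.intervalIntegrable ha hb) hrg hrwin
  refine squeeze_zero' (.of_forall hV0)
    ((eventually_ge_atTop 0).mono fun t ht => hrσ.le_mul_exp_integral hV hV' hVr ht) ?_
  simpa using (Real.tendsto_exp_atBot.comp hlog).const_mul (V 0)

end SwitchedComparison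

section Lyapunov

variable {N : Type*} [Fintype N] {γ k lam : ℝ}

/-- The smallest eigenvalue of `[[2a, -1], [-1, 2c]]`; the paper's `μ̄` is
`minEigenvalue ((1 - γ ^ 2) * k * lam) γ`. -/
noncomputable def minEigenvalue (a c : ℝ) : ℝ := a + c - √((a - c) ^ 2 + 1)

lemma minEigenvalue_mul_le (a c : ℝ) (x v : N → ℝ) :
    minEigenvalue a c * (x ⬝ᵥ x + v ⬝ᵥ v) ≤
      2 * a * (x ⬝ᵥ x) - 2 * (x ⬝ᵥ v) + 2 * c * (v ⬝ᵥ v) := by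
  set μ := minEigenvalue a c with hμ
  have hsqrt : √((a - c) ^ 2 + 1) ^ 2 = (a - c) ^ 2 + 1 := Real.sq_sqrt (by positivity)
  have hpos : 0 < 2 * a - μ := by
    have : |a - c| < √((a - c) ^ 2 + 1) := Real.lt_sqrt_of_sq_lt (by rw [sq_abs]; linarith)
    rw [hμ, minEigenvalue]
    linarith [neg_abs_le (a - c)]
  have hdet : (1 : ℝ) ^ 2 ≤ (2 * a - μ) * (2 * c - μ) := by
    rw [hμ, minEigenvalue]
    linarith
  linarith [dotProduct_quadratic_nonneg hpos hdet x v]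

/-- The quadratic Lyapunov function `|x|² - 2γ x·v + |v|²` of the error state `z = (x, v)`. -/
def lyapunov (γ : ℝ) (z : N ⊕ N → ℝ) : ℝ :=
  (z ∘ Sum.inl) ⬝ᵥ (z ∘ Sum.inl) - 2 * γ * ((z ∘ Sum.inl) ⬝ᵥ (z ∘ Sum.inr)) +
    (z ∘ Sum.inr) ⬝ᵥ (z ∘ Sum.inr)

lemma dotProduct_self_eq_inl_add_inr (z : N ⊕ N → ℝ) :
    z ⬝ᵥ z = (z ∘ Sum.inl) ⬝ᵥ (z ∘ Sum.inl) + (z ∘ Sum.inr) ⬝ᵥ (z ∘ Sum.inr) :=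
  Fintype.sum_sum_type _

lemma mul_dotProduct_self_le_lyapunov (hγ : 0 ≤ γ) (z : N ⊕ N → ℝ) :
    (1 - γ) * (z ⬝ᵥ z) ≤ lyapunov γ z := by
  rw [dotProduct_self_eq_inl_add_inr, lyapunov]
  have := dotProduct_quadratic_nonneg (b := 1) one_pos (by norm_num : (1 : ℝ) ^ 2 ≤ 1 * 1)
    (z ∘ Sum.inl) (z ∘ Sum.inr)
  linarith [mul_nonneg hγ this]

lemma lyapunov_nonneg (hγ0 : 0 ≤ γ) (hγ1 : γ ≤ 1) (z : N ⊕ N → ℝ) : 0 ≤ lyapunov γ z :=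
  (mul_nonneg (sub_nonneg.2 hγ1) (dotProduct_self_star_nonneg z)).trans
    (mul_dotProduct_self_le_lyapunov hγ0 z)

lemma lyapunov_le_mul_dotProduct_self (hγ : 0 ≤ γ) (z : N ⊕ N → ℝ) :
    lyapunov γ z ≤ (1 + γ) * (z ⬝ᵥ z) := by
  rw [dotProduct_self_eq_inl_add_inr, lyapunov]
  have := dotProduct_quadratic_nonneg (b := -1) one_pos (by norm_num : (-1 : ℝ) ^ 2 ≤ 1 * 1)
    (z ∘ Sum.inl) (z ∘ Sum.inr)
  linarith [mul_nonneg hγ this]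

lemma continuous_lyapunov : Continuous (lyapunov (N := N) γ) := by
  unfold lyapunov
  fun_prop

/-- The matrix `F_p` of the error dynamics of a mode with interconnection matrix `M`. -/
def errorMatrix [DecidableEq N] (γ k : ℝ) (M : Matrix N N ℝ) : Matrix (N ⊕ N) (N ⊕ N) ℝ :=
  fromBlocks (-(k • M)) 1 (-((γ * k) • M)) 0

/-- The derivative of `lyapunov γ` along the flow of `errorMatrix γ k M`. -/
def lyapunovDeriv (γ k : ℝ) (M : Matrix N N ℝ) (z : N ⊕ N → ℝ) : ℝ :=
  -(2 * k * (1 - γ ^ 2)) * ((z ∘ Sum.inl) ⬝ᵥ M *ᵥ (z ∘ Sum.inl)) +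
    2 * ((z ∘ Sum.inl) ⬝ᵥ (z ∘ Sum.inr)) - 2 * γ * ((z ∘ Sum.inr) ⬝ᵥ (z ∘ Sum.inr))

lemma hasDerivAt_lyapunov [DecidableEq N] {M : Matrix N N ℝ} {z : ℝ → N ⊕ N → ℝ} {s : ℝ}
    (hz : HasDerivAt z (errorMatrix γ k M *ᵥ z s) s) :
    HasDerivAt (fun t => lyapunov γ (z t)) (lyapunovDeriv γ k M (z s)) s := by
  rw [errorMatrix, fromBlocks_mulVec, hasDerivAt_pi] at hz
  set x : ℝ → N → ℝ := fun t => z t ∘ Sum.inl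
  set v : ℝ → N → ℝ := fun t => z t ∘ Sum.inr
  have hx : HasDerivAt x (-(k • M) *ᵥ x s + (1 : Matrix N N ℝ) *ᵥ v s) s :=
    hasDerivAt_pi.2 fun i => hz (Sum.inl i)
  have hv : HasDerivAt v (-((γ * k) • M) *ᵥ x s + (0 : Matrix N N ℝ) *ᵥ v s) s :=
    hasDerivAt_pi.2 fun i => hz (Sum.inr i)
  refine (((hasDerivAt_dotProduct hx hx).fun_sub
    ((hasDerivAt_dotProduct hx hv).const_mul (2 * γ))).fun_add
    (hasDerivAt_dotProduct hv hv)).congr_deriv ?_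
  change _ = -(2 * k * (1 - γ ^ 2)) * (x s ⬝ᵥ M *ᵥ x s) + 2 * (x s ⬝ᵥ v s) - 2 * γ * (v s ⬝ᵥ v s)
  simp only [neg_mulVec, smul_mulVec, one_mulVec, zero_mulVec, add_dotProduct, dotProduct_add,
    neg_dotProduct, dotProduct_neg, smul_dotProduct, dotProduct_smul, smul_eq_mul, add_zero,
    dotProduct_comm (M *ᵥ x s), dotProduct_comm (v s) (x s)]
  ring

lemma lyapunovDeriv_le {M : Matrix N N ℝ} (hk : 0 ≤ k) (hγ0 : 0 ≤ γ) (hγ1 : γ ≤ 1)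
    (hM : ∀ x, lam * (x ⬝ᵥ x) ≤ x ⬝ᵥ M *ᵥ x) (z : N ⊕ N → ℝ) :
    lyapunovDeriv γ k M z ≤ -minEigenvalue ((1 - γ ^ 2) * k * lam) γ * (z ⬝ᵥ z) := by
  have hcoeff : 0 ≤ 2 * k * (1 - γ ^ 2) :=
    mul_nonneg (by positivity) (sub_nonneg.2 (pow_le_one₀ hγ0 hγ1))
  have hquad := minEigenvalue_mul_le ((1 - γ ^ 2) * k * lam) γ (z ∘ Sum.inl) (z ∘ Sum.inr)
  rw [dotProduct_self_eq_inl_add_inr, lyapunovDeriv]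
  linarith [mul_le_mul_of_nonneg_left (hM (z ∘ Sum.inl)) hcoeff]

/-- The exponential decay rate of `lyapunov γ` in connected modes, the paper's `2β`. -/
noncomputable def decayRate (γ k lam : ℝ) : ℝ :=
  minEigenvalue ((1 - γ ^ 2) * k * lam) γ / (1 + γ)

/-- A bound on the exponential growth rate of `lyapunov γ` in disconnected modes. It is a quarter
of the growth rate `2α` used in the paper. -/
noncomputable def growthRate (γ : ℝ) : ℝ := (√(1 + γ ^ 2) - γ) / (1 - γ)

lemma growthRate_pos (hγ1 : γ < 1) : 0 < growthRate γ :=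
  div_pos (sub_pos.2 (Real.lt_sqrt_of_sq_lt (by linarith))) (sub_pos.2 hγ1)

lemma lyapunovDeriv_le_neg_decayRate_mul {M : Matrix N N ℝ} (hk : 0 ≤ k) (hγ0 : 0 ≤ γ)
    (hγ1 : γ ≤ 1) (hd : 0 ≤ decayRate γ k lam) (hM : ∀ x, lam * (x ⬝ᵥ x) ≤ x ⬝ᵥ M *ᵥ x)
    (z : N ⊕ N → ℝ) : lyapunovDeriv γ k M z ≤ -decayRate γ k lam * lyapunov γ z := by
  have hμ : minEigenvalue ((1 - γ ^ 2) * k * lam) γ = decayRate γ k lam * (1 + γ) :=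
    (div_mul_cancel₀ _ (by positivity)).symm
  have hderiv := lyapunovDeriv_le hk hγ0 hγ1 hM z
  rw [hμ] at hderiv
  linarith [mul_le_mul_of_nonneg_left (lyapunov_le_mul_dotProduct_self hγ0 z) hd]

lemma lyapunovDeriv_le_growthRate_mul {M : Matrix N N ℝ} (hk : 0 ≤ k) (hγ0 : 0 ≤ γ) (hγ1 : γ < 1)
    (hM : ∀ x, 0 ≤ x ⬝ᵥ M *ᵥ x) (z : N ⊕ N → ℝ) :
    lyapunovDeriv γ k M z ≤ growthRate γ * lyapunov γ z := by
  have hμ : -minEigenvalue ((1 - γ ^ 2) * k * 0) γ = growthRate γ * (1 - γ) := by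
    rw [growthRate, div_mul_cancel₀ _ (sub_pos.2 hγ1).ne', minEigenvalue]
    ring_nf
  have hderiv := lyapunovDeriv_le hk hγ0 hγ1.le (lam := 0) (fun x => by simpa using hM x) z
  rw [hμ] at hderiv
  linarith [mul_le_mul_of_nonneg_left (mul_dotProduct_self_le_lyapunov hγ0 z)
    (growthRate_pos hγ1).le]

lemma growthRate_mul_lt_decayRate_mul {α β t Tc : ℝ} (hγ1 : γ < 1)
    (hβ : β = minEigenvalue ((1 - γ ^ 2) * k * lam) γ / (2 * (1 + γ)))
    (hα : α = 2 * (√(1 + γ ^ 2) - γ) / (1 - γ)) (ht : 0 ≤ t) (h : α * t < β * Tc) :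
    growthRate γ * t < decayRate γ k lam * Tc := by
  have hβ' : β = decayRate γ k lam / 2 := by rw [hβ, decayRate, div_div, mul_comm 2]
  have hα' : α = 2 * growthRate γ := by rw [hα, growthRate, mul_div_assoc]
  rw [hα', hβ'] at h
  linarith [mul_nonneg (growthRate_pos hγ1).le ht]

end Lyapunov

section Convergence

open Filter Set MeasureTheory Topology

lemma tendsto_zero_of_lyapunov {α N : Type*} [Fintype N] {l : Filter α} {γ : ℝ}
    {z : α → N ⊕ N → ℝ} (hγ0 : 0 ≤ γ) (hγ1 : γ < 1)
    (h : Tendsto (fun t => lyapunov γ (z t)) l (𝓝 0)) : Tendsto z l (𝓝 0) := by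
  refine tendsto_zero_of_dotProduct_self <| squeeze_zero
    (fun t => dotProduct_self_star_nonneg (z t))
    (fun t => (le_div_iff₀' (sub_pos.2 hγ1)).2 (mul_dotProduct_self_le_lyapunov hγ0 (z t))) ?_
  simpa using h.div_const (1 - γ)

theorem tracking_error_convergence_jointly_connected_general {N m ι : Type*} [Fintype N]
    [DecidableEq N] [Fintype m] [DecidableEq m] {P : Set ι} {lam γ k T Tc : ℝ}
    (hγ0 : 0 ≤ γ) (hγ1 : γ < 1) (hk : 0 ≤ k) (hT : 0 < T) (hTc0 : 0 < Tc) (hTcT : Tc ≤ T)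
    (hrate : growthRate γ * (T - Tc) < decayRate γ k lam * Tc) {M : ι → Matrix N N ℝ}
    (hconn : ∀ p ∈ P, ∀ x, lam * (x ⬝ᵥ x) ≤ x ⬝ᵥ M p *ᵥ x)
    (hdisc : ∀ p ∉ P, ∀ x, 0 ≤ x ⬝ᵥ M p *ᵥ x)
    {σ : ℝ → ι} {ts : ℕ → ℝ} (hσ : IsSwitchingSignal σ ts)
    (hwin : ∀ j : ℕ,
      ENNReal.ofReal Tc ≤ volume {s : ℝ | s ∈ Ico (j * T) ((j + 1) * T) ∧ σ s ∈ P})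
    {ε : ℝ → (N ⊕ N) × m → ℝ} (hε : ContinuousOn ε (Ici 0))
    (hODE : ∀ s, 0 ≤ s → (∀ i, s ≠ ts i) →
      HasDerivAt ε ((errorMatrix γ k (M (σ s)) ⊗ₖ (1 : Matrix m m ℝ)) *ᵥ ε s) s) :
    Tendsto ε atTop (𝓝 0) := by
  have hg : 0 ≤ growthRate γ := (growthRate_pos hγ1).le
  have hd : 0 ≤ decayRate γ k lam :=
    (pos_of_mul_pos_left ((mul_nonneg hg (sub_nonneg.2 hTcT)).trans_lt hrate) hTc0.le).le
  suffices ∀ a : m, Tendsto (fun t i => ε t (i, a)) atTop (𝓝 0) from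
    tendsto_pi_nhds.2 fun c => tendsto_pi_nhds.1 (this c.2) c.1
  intro a
  have hz (s : ℝ) (hs : 0 ≤ s) (hts : ∀ i, s ≠ ts i) :
      HasDerivAt (fun t i => ε t (i, a)) (errorMatrix γ k (M (σ s)) *ᵥ fun i => ε s (i, a)) s :=
    hasDerivAt_pi.2 fun i => (hasDerivAt_pi.1 (hODE s hs hts) (i, a)).congr_deriv
      (kronecker_one_mulVec_apply _ _ i a)
  refine tendsto_zero_of_lyapunov hγ0 hγ1 <|
    hσ.tendsto_zero_of_deriv_le hT hd hg hrate hwin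
      (continuous_lyapunov.comp_continuousOn (by fun_prop))
      (fun t => lyapunov_nonneg hγ0 hγ1.le _)
      (fun s hs hts => hasDerivAt_lyapunov (hz s hs hts))
      (fun s hs => lyapunovDeriv_le_neg_decayRate_mul hk hγ0 hγ1.le hd (hconn _ hs) _)
      (fun s hs => lyapunovDeriv_le_growthRate_mul hk hγ0 hγ1 (hdisc _ hs) _)

end Convergence

/-- second conclusion of Theorem 2 of the paper. Under the hypotheses of
Theorem 2 (switched error system with dwell time `τ`, per-window connected time at least
`T^c` with `βT^c > α(T - T^c)`, where `β = μ̄/(2(1+γ))`,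
`μ̄ = (1-γ²)kλ̄ + γ - √(((1-γ²)kλ̄-γ)²+1)`, `α = 2(√(1+γ²)-γ)/(1-γ)`), if moreover
`δ(t) ≡ 0`, then the solution `ε` of `ε̇ = (F_{σ(t)} ⊗ I₂)ε` satisfies `ε(t) → 0`
as `t → ∞`. -/
theorem tracking_error_convergence_jointly_connected {n : ℕ} (hn : 1 ≤ n)
    {ι : Type} [Fintype ι] (Pc Pd : Set ι) (hPcd : Pc ∪ Pd = Set.univ)
    (lam γ k T Tc τ : ℝ)
    (hlam : 0 < lam) (hγ0 : 0 < γ) (hγ1 : γ < 1)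
    (hk : 1 / (4 * γ * (1 - γ ^ 2) * lam) < k)
    (hT : 0 < T) (hTc0 : 0 < Tc) (hTcT : Tc ≤ T) (hτ : 0 < τ)
    (μ β α : ℝ)
    (hμ : μ = (1 - γ ^ 2) * k * lam + γ -
      Real.sqrt (((1 - γ ^ 2) * k * lam - γ) ^ 2 + 1))
    (hβ : β = μ / (2 * (1 + γ)))
    (hα : α = 2 * (Real.sqrt (1 + γ ^ 2) - γ) / (1 - γ))
    (hwin : α * (T - Tc) < β * Tc)
    (M : ι → Matrix (Fin n) (Fin n) ℝ)
    (hMc : ∀ p ∈ Pc, (M p).PosDef)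
    (heig : ∀ (p : ι) (hp : p ∈ Pc) (i : Fin n), lam ≤ (hMc p hp).1.eigenvalues i)
    (hMd : ∀ p ∈ Pd, (M p).PosSemidef)
    (σ : ℝ → ι) (ts : ℕ → ℝ)
    (hts0 : ts 0 = 0) (htsm : StrictMono ts)
    (htsτ : ∀ i, τ ≤ ts (i + 1) - ts i)
    (htstop : Filter.Tendsto ts Filter.atTop Filter.atTop)
    (hconst : ∀ i, ∀ s ∈ Set.Ico (ts i) (ts (i + 1)), σ s = σ (ts i))
    (hwinc : ∀ j : ℕ, ENNReal.ofReal Tc ≤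
      MeasureTheory.volume
        {s : ℝ | s ∈ Set.Ico ((j : ℝ) * T) (((j : ℝ) + 1) * T) ∧ σ s ∈ Pc})
    (hwind : ∀ j : ℕ,
      MeasureTheory.volume
        {s : ℝ | s ∈ Set.Ico ((j : ℝ) * T) (((j : ℝ) + 1) * T) ∧ σ s ∈ Pd} ≤
          ENNReal.ofReal (T - Tc))
    (ε : ℝ → ((Fin n ⊕ Fin n) × Fin 2) → ℝ) (hcont : Continuous ε)
    (hODE : ∀ s, 0 ≤ s → (∀ i, s ≠ ts i) →
      HasDerivAt ε
        (((Matrix.fromBlocks (-(k • M (σ s))) (1 : Matrix (Fin n) (Fin n) ℝ)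
              (-((γ * k) • M (σ s))) 0) ⊗ₖ
            (1 : Matrix (Fin 2) (Fin 2) ℝ)).mulVec (ε s)) s) :
    Filter.Tendsto ε Filter.atTop (nhds 0) := by
  have hγ2 : 0 < 1 - γ ^ 2 := sub_pos.2 (pow_lt_one₀ hγ0.le hγ1 two_ne_zero)
  have hk0 : 0 ≤ k := (lt_trans (by positivity) hk).le
  have hPd (p : ι) (hp : p ∉ Pc) : p ∈ Pd := (hPcd.ge (Set.mem_univ p)).resolve_left hp
  exact tracking_error_convergence_jointly_connected_general hγ0.le hγ1 hk0 hT hTc0 hTcT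
    (growthRate_mul_lt_decayRate_mul hγ1 (by rw [hβ, hμ, minEigenvalue]) hα
      (sub_nonneg.2 hTcT) hwin)
    (fun p hp => mul_dotProduct_self_le_of_le_eigenvalues (hMc p hp).1 (heig p hp))
    (fun p hp => (hMd p (hPd p hp)).dotProduct_mulVec_nonneg)
    ⟨hts0, htsm.monotone, htstop, hconst⟩ hwinc hcont.continuousOn hODE
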